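/- arXiv:1902.05671 — 2 statements merged into one kernel-verified Lean document; each statement's English description precedes it below -/
import Mathlib

section
/- Let G be a connected simple graph on N vertices with Laplacian matrix L, and let c be a vertex of G such that the pair (L, e_c) is controllable. Let G' be the graph obtained from G by adding one new vertex a adjacent only to c, with Laplacian L' = [[1, −e_cᵀ], [−e_c, L + e_c e_cᵀ]] of order N+1 (the new vertex listed first). Then (L', e_a) is controllable, i.e., G' is Laplacian controllable by an input connected to the new vertex a. -/
/-- `(M, b)` is controllable: `b, Mb, M²b, …` span the whole space. -/
def IsControllable {ι : Type} [Fintype ι] [DecidableEq ι]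
    (M : Matrix ι ι ℝ) (b : ι → ℝ) : Prop :=
  Submodule.span ℝ (Set.range fun j : Fin (Fintype.card ι) => (M ^ (j : ℕ)).mulVec b) = ⊤

/-!
A pair `(M, b)` is controllable iff the only `M`-invariant subspace containing `b` is the whole
space: by Cayley–Hamilton the first `card ι` Krylov vectors already span an invariant subspace.
If `M` extends `A` by a coordinate `a` with column `(α, β)`, then modulo `e_a` it acts as `A` and
sends `e_a` to `β`, so the `M`-invariant subspaces containing `e_a` are the preimages of the
`A`-invariant subspaces containing `β`. For a pendant vertex at `c` one has `A = L + e_c e_cᵀ` and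
`β = -e_c`, and on subspaces containing `e_c` invariance under `A` and under `L` is the same thing.
-/

open Matrix Module.End

section InvariantSubspaces

variable {R ι : Type*} [CommRing R]

theorem comap_map_funLeft_inr_eq_self [DecidableEq ι] {p : Submodule R (Unit ⊕ ι → R)}
    (hp : Pi.single (Sum.inl ()) 1 ∈ p) :
    (p.map (LinearMap.funLeft R R Sum.inr)).comap (LinearMap.funLeft R R Sum.inr) = p := by
  refine Submodule.comap_map_eq_self fun x hx => ?_
  have hx_inr (i : ι) : x (Sum.inr i) = 0 := congrFun hx i
  have hx_single : x = x (Sum.inl ()) • Pi.single (Sum.inl ()) 1 := by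
    ext (_ | i) <;> simp [hx_inr]
  rw [hx_single]
  exact p.smul_mem _ hp

variable [Fintype ι]

theorem funLeft_inr_fromBlocks_mulVec (α : Matrix Unit Unit R) (r : Matrix Unit ι R)
    (β : ι → R) (A : Matrix ι ι R) (x : Unit ⊕ ι → R) :
    LinearMap.funLeft R R Sum.inr (fromBlocks α r (replicateCol Unit β) A *ᵥ x) =
      x (Sum.inl ()) • β + A *ᵥ LinearMap.funLeft R R Sum.inr x := by
  ext i
  simp [LinearMap.funLeft, fromBlocks_mulVec, mulVec, dotProduct, mul_comm]

variable [DecidableEq ι]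

theorem pow_mulVec_mem_of_mem_invtSubmodule {M : Matrix ι ι R} {p : Submodule R (ι → R)}
    (hp : p ∈ invtSubmodule M.toLin') {x : ι → R} (hx : x ∈ p) (n : ℕ) : M ^ n *ᵥ x ∈ p := by
  induction n with
  | zero => simpa using hx
  | succ n ih => simpa [pow_succ'] using hp ih

theorem pow_mulVec_mem_span_range_lt_card (M : Matrix ι ι R) (b : ι → R) (n : ℕ) :
    M ^ n *ᵥ b ∈
      Submodule.span R (Set.range fun j : Fin (Fintype.card ι) => M ^ (j : ℕ) *ᵥ b) := by
  nontriviality R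
  have hdeg : (Polynomial.X ^ n %ₘ M.charpoly).degree < Fintype.card ι := by
    rw [← M.charpoly_degree_eq_dim]
    exact Polynomial.degree_modByMonic_lt _ M.charpoly_monic
  rw [M.pow_eq_aeval_mod_charpoly, Polynomial.aeval_def, Polynomial.eval₂_eq_sum,
    Polynomial.sum_def, sum_mulVec]
  refine Submodule.sum_mem _ fun i hi => ?_
  have hi_lt : i < Fintype.card ι := by
    exact_mod_cast (Polynomial.le_degree_of_mem_supp i hi).trans_lt hdeg
  rw [← Algebra.smul_def, smul_mulVec]
  exact Submodule.smul_mem _ _ (Submodule.subset_span ⟨⟨i, hi_lt⟩, rfl⟩)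

theorem mem_invtSubmodule_add_vecMulVec_iff {A : Matrix ι ι R} {b : ι → R} (k : ι → R)
    {p : Submodule R (ι → R)} (hb : b ∈ p) :
    p ∈ invtSubmodule (A + vecMulVec b k).toLin' ↔ p ∈ invtSubmodule A.toLin' := by
  have hmem (x : ι → R) : (A + vecMulVec b k) *ᵥ x ∈ p ↔ A *ᵥ x ∈ p := by
    rw [add_mulVec, vecMulVec_mulVec, op_smul_eq_smul]
    exact Submodule.add_mem_iff_left p (p.smul_mem _ hb)
  simp only [mem_invtSubmodule, SetLike.le_def, Submodule.mem_comap, toLin'_apply, hmem]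

theorem comap_funLeft_inr_mem_invtSubmodule_iff (α : Matrix Unit Unit R) (r : Matrix Unit ι R)
    {β : ι → R} {A : Matrix ι ι R} {q : Submodule R (ι → R)} (hβ : β ∈ q) :
    q.comap (LinearMap.funLeft R R Sum.inr) ∈
        invtSubmodule (fromBlocks α r (replicateCol Unit β) A).toLin' ↔
      q ∈ invtSubmodule A.toLin' := by
  have hsurj : Function.Surjective (LinearMap.funLeft R R (Sum.inr : ι → Unit ⊕ ι)) :=
    LinearMap.funLeft_surjective_of_injective _ _ _ Sum.inr_injective
  simp only [mem_invtSubmodule, SetLike.le_def, Submodule.mem_comap, toLin'_apply,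
    funLeft_inr_fromBlocks_mulVec, Submodule.add_mem_iff_right q (q.smul_mem _ hβ), hsurj.forall]

end InvariantSubspaces

section Controllability

variable {ι : Type} [Fintype ι] [DecidableEq ι]

theorem isControllable_iff_forall_mem_invtSubmodule {M : Matrix ι ι ℝ} {b : ι → ℝ} :
    IsControllable M b ↔
      ∀ p : Submodule ℝ (ι → ℝ), b ∈ p → p ∈ invtSubmodule M.toLin' → p = ⊤ := by
  constructor
  · intro h p hb hp
    rw [eq_top_iff, ← show _ = ⊤ from h, Submodule.span_le]
    rintro _ ⟨j, rfl⟩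
    exact pow_mulVec_mem_of_mem_invtSubmodule hp hb j
  · intro h
    refine h _ (by simpa using pow_mulVec_mem_span_range_lt_card M b 0) ?_
    rw [mem_invtSubmodule, Submodule.span_le]
    rintro _ ⟨j, rfl⟩
    simpa [pow_succ'] using pow_mulVec_mem_span_range_lt_card M b (j + 1)

theorem isControllable_smul_iff {M : Matrix ι ι ℝ} {b : ι → ℝ} {γ : ℝ} (hγ : γ ≠ 0) :
    IsControllable M (γ • b) ↔ IsControllable M b := by
  simp only [isControllable_iff_forall_mem_invtSubmodule, Submodule.smul_mem_iff _ hγ]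

theorem isControllable_add_vecMulVec_iff {A : Matrix ι ι ℝ} {b : ι → ℝ} (k : ι → ℝ) :
    IsControllable (A + vecMulVec b k) b ↔ IsControllable A b := by
  simp only [isControllable_iff_forall_mem_invtSubmodule]
  exact forall₂_congr fun p hb => by rw [mem_invtSubmodule_add_vecMulVec_iff k hb]

theorem isControllable_fromBlocks_iff (α : Matrix Unit Unit ℝ) (r : Matrix Unit ι ℝ)
    {β : ι → ℝ} {A : Matrix ι ι ℝ} :
    IsControllable (fromBlocks α r (replicateCol Unit β) A) (Pi.single (Sum.inl ()) 1) ↔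
      IsControllable A β := by
  set a : Unit ⊕ ι → ℝ := Pi.single (Sum.inl ()) 1
  let π : (Unit ⊕ ι → ℝ) →ₗ[ℝ] (ι → ℝ) := LinearMap.funLeft ℝ ℝ Sum.inr
  have hπ : Function.Surjective π :=
    LinearMap.funLeft_surjective_of_injective _ _ _ Sum.inr_injective
  have hπa : π a = 0 := by ext; simp [π, a]
  simp only [isControllable_iff_forall_mem_invtSubmodule]
  constructor
  · intro h q hβ hq
    have hcomap : q.comap π = ⊤ :=
      h _ (by simp [hπa]) ((comap_funLeft_inr_mem_invtSubmodule_iff α r hβ).2 hq)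
    exact Submodule.comap_injective_of_surjective hπ hcomap
  · intro h p ha hp
    have hβ : β ∈ p.map π :=
      ⟨_, hp ha, by rw [toLin'_apply, funLeft_inr_fromBlocks_mulVec]; simp [π, hπa, a]⟩
    rw [← comap_map_funLeft_inr_eq_self ha] at hp ⊢
    rw [h _ hβ ((comap_funLeft_inr_mem_invtSubmodule_iff α r hβ).1 hp), Submodule.comap_top]

theorem pendant_vertex_controllable_general (α : Matrix Unit Unit ℝ) (r : Matrix Unit ι ℝ)
    {γ : ℝ} (hγ : γ ≠ 0) {L : Matrix ι ι ℝ} {b : ι → ℝ} (k : ι → ℝ) :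
    IsControllable (fromBlocks α r (replicateCol Unit (γ • b)) (L + vecMulVec b k))
      (Pi.single (Sum.inl ()) 1) ↔ IsControllable L b := by
  rw [isControllable_fromBlocks_iff, isControllable_smul_iff hγ, isControllable_add_vecMulVec_iff]

end Controllability

/-- Corollary: appending a pendant vertex preserves single-input
Laplacian controllability.  If a connected simple graph `G` on `N` vertices
with Laplacian `L` is controllable by an input at vertex `c`, then the graph
obtained by adding one new vertex (listed first, index `Sum.inl ()`) adjacent
only to `c`, with Laplacian `[[1, -e_cᵀ], [-e_c, L + e_c e_cᵀ]]`, is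
controllable by an input connected to the new vertex. -/
theorem pendant_vertex_controllable (N : ℕ) (G : SimpleGraph (Fin N))
    [DecidableRel G.Adj] (hG : G.Connected) (c : Fin N)
    (hc : IsControllable (G.lapMatrix ℝ) (fun i => if i = c then 1 else 0)) :
    IsControllable
      (fun p q : Unit ⊕ Fin N =>
        match p, q with
        | Sum.inl _, Sum.inl _ => (1 : ℝ)
        | Sum.inl _, Sum.inr j => if j = c then -1 else 0
        | Sum.inr i, Sum.inl _ => if i = c then -1 else 0
        | Sum.inr i, Sum.inr j => G.lapMatrix ℝ i j + if i = c ∧ j = c then 1 else 0)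
      (fun p => if p = Sum.inl () then 1 else 0) := by
  refine (congrArg₂ IsControllable ?_ ?_).mpr <|
    (pendant_vertex_controllable_general 1 (replicateRow Unit fun j => if j = c then -1 else 0)
      (neg_ne_zero.2 one_ne_zero) fun j => if j = c then 1 else 0).2 hc
  · ext (_ | i) (_ | j) <;> simp [vecMulVec_apply, ← ite_and, and_comm, neg_ite]
  · ext p; simp [Pi.single_apply]
end

section
/- For every integer k ≥ 2, the k-vertex path graph P_k is Laplacian controllable by an input connected to one of its terminal vertices: if L is the Laplacian matrix of the path on vertex set {1,…,k} with edges {i, i+1} for i = 1,…,k−1, then the pair (L, e_1) is controllable. Equivalently, all k eigenvalues of L are distinct and every eigenvector of L has nonzero first entry. -/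
/-- Laplacian matrix of the `k`-vertex path graph (0-indexed vertices
`0, 1, …, k-1` with edges `{i, i+1}`): tridiagonal with diagonal
`(1, 2, …, 2, 1)` and `-1` on the sub- and superdiagonals. -/
def pathLap (k : ℕ) : Matrix (Fin k) (Fin k) ℝ :=
  Matrix.of fun i j =>
    if i = j then (if i.val = 0 ∨ i.val = k - 1 then 1 else 2)
    else if i.val + 1 = j.val ∨ j.val + 1 = i.val then -1 else 0

/-!
`L` vanishes below its subdiagonal, and the subdiagonal entries are nonzero. Hence `L ^ j e₁` is
supported on the first `j + 1` coordinates, and its `(j + 1)`-st entry is a product of subdiagonal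
entries. The matrix with columns `e₁, L e₁, L² e₁, …` is therefore triangular with nonzero diagonal,
so its columns span, which is controllability.

For any controllable pair `(M, b)`, a left eigenvector `w` of `M` for `μ` satisfies
`w ⬝ M ^ j b = μ ^ j (w ⬝ b)`, so `w ⬝ b = 0` would make `w` orthogonal to the whole space. Two
independent left eigenvectors for the same eigenvalue would have a nontrivial combination orthogonal
to `b`; as `L` is symmetric, and so has a basis of eigenvectors, its eigenvalues are distinct.
-/

open Matrix

theorem vecMul_eq_mulVec_of_isSymm {ι R : Type*} [Fintype ι] [NonUnitalCommSemiring R]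
    {M : Matrix ι ι R} (hM : M.IsSymm) (v : ι → R) : v ᵥ* M = M *ᵥ v := by
  rw [← vecMul_transpose, hM.eq]

theorem vecMul_pow_eq_smul {ι R : Type*} [Fintype ι] [DecidableEq ι] [CommSemiring R]
    {M : Matrix ι ι R} {w : ι → R} {μ : R} (hw : w ᵥ* M = μ • w) (j : ℕ) :
    w ᵥ* M ^ j = μ ^ j • w := by
  induction j with
  | zero => simp
  | succ j ih => rw [pow_succ, ← vecMul_vecMul, ih, smul_vecMul, hw, smul_smul, pow_succ]

theorem linearIndependent_eigenvectorBasis {ι 𝕜 : Type*} [Fintype ι] [DecidableEq ι] [RCLike 𝕜]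
    {M : Matrix ι ι 𝕜} (hM : M.IsHermitian) :
    LinearIndependent 𝕜 fun i => (hM.eigenvectorBasis i).ofLp :=
  hM.eigenvectorBasis.orthonormal.linearIndependent.map'
    (WithLp.linearEquiv 2 𝕜 (ι → 𝕜)).toLinearMap (LinearEquiv.ker _)

namespace IsControllable

variable {ι : Type} [Fintype ι] [DecidableEq ι] {M : Matrix ι ι ℝ} {b : ι → ℝ}

theorem eq_zero_of_forall_dotProduct_eq_zero (hc : IsControllable M b) {w : ι → ℝ}
    (hw : ∀ j < Fintype.card ι, w ⬝ᵥ (M ^ j) *ᵥ b = 0) : w = 0 :=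
  (dotProductEquiv ℝ ι).map_eq_zero_iff.1 <| LinearMap.ext_on_range hc fun j => hw j j.isLt

theorem dotProduct_ne_zero_of_vecMul_eq_smul (hc : IsControllable M b) {w : ι → ℝ} (hw0 : w ≠ 0)
    {μ : ℝ} (hw : w ᵥ* M = μ • w) : w ⬝ᵥ b ≠ 0 := fun hb =>
  hw0 <| hc.eq_zero_of_forall_dotProduct_eq_zero fun j _ => by
    rw [dotProduct_mulVec, vecMul_pow_eq_smul hw, smul_dotProduct, hb, smul_zero]

theorem injective_of_vecMul_eq_smul (hc : IsControllable M b) {κ : Type*} {u : κ → ι → ℝ}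
    {μ : κ → ℝ} (hu : ∀ i, u i ᵥ* M = μ i • u i) (hind : LinearIndependent ℝ u) :
    Function.Injective μ := by
  intro i j hij
  by_contra hne
  have hcomb : (u j ⬝ᵥ b) • u i + (-(u i ⬝ᵥ b)) • u j = 0 := by
    by_contra hcomb_ne
    refine hc.dotProduct_ne_zero_of_vecMul_eq_smul hcomb_ne (μ := μ i) ?_ ?_
    · simp only [add_vecMul, smul_vecMul, hu, hij, smul_add, smul_comm (μ j)]
    · simp only [add_dotProduct, smul_dotProduct, smul_eq_mul]
      ring
  have hj : u j ⬝ᵥ b = 0 :=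
    ((LinearIndepOn.pair_iff u hne).1 (hind.linearIndepOn _) _ _ hcomb).1
  exact hc.dotProduct_ne_zero_of_vecMul_eq_smul (hind.ne_zero j) (hu j) hj

theorem eigenvalues_injective (hc : IsControllable M b) (hM : M.IsHermitian) :
    Function.Injective hM.eigenvalues := by
  refine hc.injective_of_vecMul_eq_smul (u := fun i => (hM.eigenvectorBasis i).ofLp) (fun i => ?_)
    (linearIndependent_eigenvectorBasis hM)
  rw [vecMul_eq_mulVec_of_isSymm (isHermitian_iff_isSymm.1 hM), hM.mulVec_eigenvectorBasis]

theorem nodup_roots_charpoly (hc : IsControllable M b) (hM : M.IsHermitian) :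
    M.charpoly.roots.Nodup := by
  rw [hM.roots_charpoly_eq_eigenvalues]
  exact Finset.univ.nodup.map (RCLike.ofReal_injective.comp (hc.eigenvalues_injective hM))

end IsControllable

/-- Upper Hessenberg matrices, that is, those vanishing below the first subdiagonal, which are
unreduced: all entries of the first subdiagonal are nonzero. The powers of such a matrix applied to
the first basis vector form a triangular system. -/
structure IsUnreducedHessenberg {R : Type*} [Zero R] {n : ℕ} (M : Matrix (Fin n) (Fin n) R) :
    Prop where
  apply_eq_zero_of_lt {i j : Fin n} : (j : ℕ) + 1 < i → M i j = 0
  apply_ne_zero_of_eq {i j : Fin n} : (i : ℕ) = j + 1 → M i j ≠ 0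

namespace IsUnreducedHessenberg

section Pow

variable {R : Type*} [Semiring R] {n : ℕ} {M : Matrix (Fin n) (Fin n) R}

theorem pow_apply_eq_zero_of_lt (hM : IsUnreducedHessenberg M) {i c : Fin n} {j : ℕ}
    (h : (c : ℕ) + j < i) : (M ^ j) i c = 0 := by
  induction j generalizing i with
  | zero => exact one_apply_ne (by omega)
  | succ j ih =>
    rw [pow_succ', mul_apply]
    refine Finset.sum_eq_zero fun l _ => ?_
    by_cases hl : (c : ℕ) + j < l
    · rw [ih hl, mul_zero]
    · rw [hM.apply_eq_zero_of_lt (by omega), zero_mul]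

theorem pow_apply_ne_zero_of_eq [Nontrivial R] [NoZeroDivisors R] (hM : IsUnreducedHessenberg M)
    {i c : Fin n} {j : ℕ} (h : (i : ℕ) = c + j) : (M ^ j) i c ≠ 0 := by
  induction j generalizing i with
  | zero => simp [Fin.ext h]
  | succ j ih =>
    let l : Fin n := ⟨c + j, by omega⟩
    have hstep : (M ^ (j + 1)) i c = M i l * (M ^ j) l c := by
      rw [pow_succ', mul_apply]
      refine Finset.sum_eq_single l (fun l' _ hl' => ?_) (by simp)
      rcases lt_or_gt_of_ne (Fin.val_ne_of_ne hl') with hlt | hgt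
      · rw [hM.apply_eq_zero_of_lt (by grind), zero_mul]
      · rw [hM.pow_apply_eq_zero_of_lt hgt, mul_zero]
    rw [hstep]
    exact mul_ne_zero (hM.apply_ne_zero_of_eq h) (ih rfl)

end Pow

theorem linearIndependent_pow_mulVec_single_zero {R : Type*} [CommRing R] [IsDomain R] {n : ℕ}
    [NeZero n] {M : Matrix (Fin n) (Fin n) R} (hM : IsUnreducedHessenberg M) :
    LinearIndependent R fun j : Fin n => (M ^ (j : ℕ)) *ᵥ Pi.single 0 1 := by
  let K : Matrix (Fin n) (Fin n) R := of fun i j => (M ^ (j : ℕ)) i 0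
  have hK : K.IsUpperTriangular := fun i j hji => hM.pow_apply_eq_zero_of_lt (by simpa using hji)
  have hdet : K.det ≠ 0 := by
    rw [det_of_isUpperTriangular hK]
    exact Finset.prod_ne_zero_iff.2 fun j _ => hM.pow_apply_ne_zero_of_eq (by simp)
  simp only [mulVec_single_one]
  exact linearIndependent_cols_of_det_ne_zero hdet

theorem isControllable_single_zero {n : ℕ} [NeZero n] {M : Matrix (Fin n) (Fin n) ℝ}
    (hM : IsUnreducedHessenberg M) : IsControllable M (Pi.single 0 1) :=
  (hM.linearIndependent_pow_mulVec_single_zero.comp (Fin.cast (Fintype.card_fin n))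
    (Fin.cast_injective _)).span_eq_top_of_card_eq_finrank' (by simp)

end IsUnreducedHessenberg

theorem pathLap_isSymm (k : ℕ) : (pathLap k).IsSymm := by
  ext i j
  by_cases h : i = j
  · rw [h, transpose_apply]
  · simp only [pathLap, transpose_apply, of_apply, h, Ne.symm h, if_false, or_comm]

theorem pathLap_isUnreducedHessenberg (k : ℕ) : IsUnreducedHessenberg (pathLap k) where
  apply_eq_zero_of_lt {i j} h := by
    simp only [pathLap, of_apply]
    rw [if_neg (by omega), if_neg (by omega)]
  apply_ne_zero_of_eq {i j} h := by
    simp only [pathLap, of_apply]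
    rw [if_neg (by omega), if_pos (by omega)]
    norm_num

/-- the `k`-vertex path is Laplacian controllable by an input at a
terminal vertex: `(L, e₁)` is controllable; equivalently, all `k` eigenvalues of
`L` are distinct (the characteristic polynomial has `k` pairwise distinct roots)
and every eigenvector of `L` has nonzero first entry. -/
theorem path_controllable (k : ℕ) (hk : 2 ≤ k) :
    IsControllable (pathLap k) (fun i => if i = (⟨0, by omega⟩ : Fin k) then 1 else 0) ∧
    (Multiset.card (pathLap k).charpoly.roots = k ∧ (pathLap k).charpoly.roots.Nodup) ∧
    (∀ (lam : ℝ) (v : Fin k → ℝ), v ≠ 0 → (pathLap k).mulVec v = lam • v →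
      v ⟨0, by omega⟩ ≠ 0) := by
  have : NeZero k := ⟨by omega⟩
  have hsymm := pathLap_isSymm k
  have hherm : (pathLap k).IsHermitian := isHermitian_iff_isSymm.2 hsymm
  have hc : IsControllable (pathLap k) (Pi.single 0 1) :=
    (pathLap_isUnreducedHessenberg k).isControllable_single_zero
  refine ⟨?_, ⟨?_, hc.nodup_roots_charpoly hherm⟩, fun lam v hv0 hv => ?_⟩
  · convert hc with i
    exact (Pi.single_apply _ _ _).symm
  · rw [← hherm.splits_charpoly.natDegree_eq_card_roots, charpoly_natDegree_eq_dim,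
      Fintype.card_fin]
  · have hv' : v ᵥ* pathLap k = lam • v := by
      rw [vecMul_eq_mulVec_of_isSymm hsymm, hv]
    simpa using hc.dotProduct_ne_zero_of_vecMul_eq_smul hv0 hv'
end
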